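/- Suppose k ≥ 2, Ω is nonempty, the set of good k-colourings of G is nonempty, and α ∈ [0,1] is such that for all distinct colours c, q ∈ Fin k: |{σ ∈ Ω(c,c) : u ∈ Q_{c,q}}| ≤ α·|Ω(c,c)| and |{σ ∈ Ω(q,c) : u ∈ Q_{q,c}}| ≤ α·|Ω(q,c)|. Let ν be the uniform distribution over the good k-colourings of G, and let ν' be the distribution of the output of STEP when its input is chosen uniformly at random from Ω. Then ‖ν − ν'‖ ≤ α. -/

import Mathlib

/-- The disagreement graph `Q_{σ(v),q}`: the set of vertices `x` for which there is a
path `v = w₀, …, w_t = x` in `G` all of whose vertices receive colour `σ v` or `q`. -/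
def disagreeSet {V : Type*} {k : ℕ} (G : SimpleGraph V) (v : V)
    (σ : V → Fin k) (q : Fin k) : Set V :=
  {x | ∃ p : G.Walk v x, ∀ w ∈ p.support, σ w = σ v ∨ σ w = q}

open Classical in
/-- The `q`-switching `H(σ,q)`: exchange the colours `σ v` and `q` on the disagreement
graph, leaving all other vertices unchanged. -/
noncomputable def switchColour {V : Type*} {k : ℕ} (G : SimpleGraph V) (v : V)
    (σ : V → Fin k) (q : Fin k) : V → Fin k := fun x =>
  if x ∈ disagreeSet G v σ q then
    if σ x = σ v then q else if σ x = q then σ v else σ x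
  else σ x

/-- The set of proper `k`-colourings of `G`, as a finset. -/
noncomputable def colourings {V : Type*} [Fintype V] (G : SimpleGraph V) (k : ℕ) :
    Finset (V → Fin k) :=
  (Set.toFinite {σ : V → Fin k | ∀ x y, G.Adj x y → σ x ≠ σ y}).toFinset

/-- The set of good proper `k`-colourings of `G` (those with `σ v ≠ σ u`), as a finset. -/
noncomputable def goodColourings {V : Type*} [Fintype V] (G : SimpleGraph V) (k : ℕ)
    (v u : V) : Finset (V → Fin k) :=
  (Set.toFinite {σ : V → Fin k |
    (∀ x y, G.Adj x y → σ x ≠ σ y) ∧ σ v ≠ σ u}).toFinset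

/-- The randomized procedure STEP: on a good colouring output it unchanged; on a bad
colouring pick `q` uniformly at random from `Fin k \ {σ v}` and output `H(σ,q)`. -/
noncomputable def stepPMF {V : Type*} {k : ℕ} (hk : 2 ≤ k) (G : SimpleGraph V)
    (v u : V) (σ : V → Fin k) : PMF (V → Fin k) :=
  if σ v = σ u then
    PMF.map (fun q => switchColour G v σ q)
      (PMF.uniformOfFinset (Finset.univ.erase (σ v))
        (by
          rw [← Finset.card_pos, Finset.card_erase_of_mem (Finset.mem_univ _),
            Finset.card_univ, Fintype.card_fin]
          omega))
  else PMF.pure σ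

/-!
Switching is an involution: `(σ, q) ↦ (H(σ, q), σ v)` is its own inverse. Hence the only colouring
that STEP can change into a given good `τ` is `H(τ, τ u)`, and it does so exactly when
`u ∉ Q_{τ(v),τ(u)}`. On the good colourings the output of STEP therefore has the constant mass
`(1 + 1 / (k - 1)) / |Ω|`, except on an `α`-fraction of them, where the mass is smaller. A bad
output needs a bad input and a colour `q` with `u ∈ Q_{σ(v),q}`, which happens with probability at
most `α`. It remains to compare the constant mass with `1 / |good|`.
-/

open Finset

section Counting

lemma sum_le_mul_card_of_fiberwise {ι κ : Type*} [DecidableEq κ] {s : Finset ι} (f : ι → κ)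
    {w : ι → ℝ} {C : ℝ}
    (h : ∀ b ∈ s.image f, ∑ a ∈ s with f a = b, w a ≤ C * #{a ∈ s | f a = b}) :
    ∑ a ∈ s, w a ≤ C * #s :=
  have hf (a : ι) (ha : a ∈ s) : f a ∈ s.image f := mem_image_of_mem f ha
  calc ∑ a ∈ s, w a = ∑ b ∈ s.image f, ∑ a ∈ s with f a = b, w a :=
        (sum_fiberwise_of_maps_to hf w).symm
    _ ≤ ∑ b ∈ s.image f, C * #{a ∈ s | f a = b} := sum_le_sum h
    _ = C * #s := by rw [← mul_sum, card_eq_sum_card_fiberwise hf, Nat.cast_sum]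

end Counting

section PMF

variable {S T : Type*}

lemma sum_toReal_pmf_eq_one [Fintype S] (p : PMF S) : ∑ a, (p a).toReal = 1 := by
  rw [← ENNReal.toReal_sum fun a _ ↦ p.apply_ne_top a, ← tsum_fintype (L := .unconditional S),
    p.tsum_coe, ENNReal.toReal_one]

lemma toReal_uniformOfFinset_apply_of_mem {s : Finset S} (hs : s.Nonempty) {a : S} (ha : a ∈ s) :
    (PMF.uniformOfFinset s hs a).toReal = (#s : ℝ)⁻¹ := by
  rw [PMF.uniformOfFinset_apply_of_mem hs ha, ENNReal.toReal_inv, ENNReal.toReal_natCast]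

lemma toReal_uniformOfFinset_apply_of_notMem {s : Finset S} (hs : s.Nonempty) {a : S}
    (ha : a ∉ s) : (PMF.uniformOfFinset s hs a).toReal = 0 := by
  rw [PMF.uniformOfFinset_apply_of_notMem hs ha, ENNReal.toReal_zero]

lemma sum_toReal_map_uniformOfFinset [DecidableEq T] {s : Finset S} (hs : s.Nonempty)
    (f : S → T) (B : Finset T) :
    ∑ b ∈ B, ((PMF.uniformOfFinset s hs).map f b).toReal = (#{a ∈ s | f a ∈ B} : ℝ) / #s := by
  rw [← ENNReal.toReal_sum fun b _ ↦ PMF.apply_ne_top _ b, ← PMF.toOuterMeasure_apply_finset,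
    PMF.toOuterMeasure_map_apply, PMF.toOuterMeasure_uniformOfFinset_apply, ENNReal.toReal_div,
    ENNReal.toReal_natCast, ENNReal.toReal_natCast]
  simp only [Set.mem_preimage, mem_coe]

lemma toReal_bind_uniformOfFinset_apply {s : Finset S} (hs : s.Nonempty) (f : S → PMF T) (b : T) :
    ((PMF.uniformOfFinset s hs).bind f b).toReal = (∑ a ∈ s, (f a b).toReal) / #s := by
  have hsupp : ∀ a ∉ s, PMF.uniformOfFinset s hs a * f a b = 0 := fun a ha ↦ by
    rw [PMF.uniformOfFinset_apply_of_notMem hs ha, zero_mul]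
  rw [PMF.bind_apply, tsum_eq_sum hsupp, ENNReal.toReal_sum fun a _ ↦
    ENNReal.mul_ne_top (PMF.apply_ne_top _ a) (PMF.apply_ne_top _ b), sum_div]
  refine sum_congr rfl fun a ha ↦ ?_
  rw [ENNReal.toReal_mul, toReal_uniformOfFinset_apply_of_mem hs ha, inv_mul_eq_div]

lemma sum_toReal_le_add_of_le_off {p q : PMF S} {E : Finset S} {ε : ℝ}
    (hle : ∀ a ∉ E, (p a).toReal ≤ (q a).toReal) (hE : ∑ a ∈ E, (p a).toReal ≤ ε)
    (A : Finset S) : ∑ a ∈ A, (p a).toReal ≤ ∑ a ∈ A, (q a).toReal + ε := by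
  classical
  have hin : ∑ a ∈ A with a ∈ E, (p a).toReal ≤ ∑ a ∈ E, (p a).toReal :=
    sum_le_sum_of_subset_of_nonneg (fun a ha ↦ (mem_filter.1 ha).2)
      fun _ _ _ ↦ ENNReal.toReal_nonneg
  have hout : ∑ a ∈ A with a ∉ E, (p a).toReal ≤ ∑ a ∈ A, (q a).toReal :=
    (sum_le_sum fun a ha ↦ hle a (mem_filter.1 ha).2).trans
      (sum_le_sum_of_subset_of_nonneg (filter_subset _ _) fun _ _ _ ↦ ENNReal.toReal_nonneg)
  rw [← sum_filter_add_sum_filter_not A (· ∈ E)]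
  linarith

lemma abs_sum_toReal_sub_le_of_le_off [Finite S] {p q : PMF S} {E : Finset S} {ε : ℝ}
    (hle : ∀ a ∉ E, (p a).toReal ≤ (q a).toReal) (hE : ∑ a ∈ E, (p a).toReal ≤ ε)
    (A : Finset S) : |∑ a ∈ A, (p a).toReal - ∑ a ∈ A, (q a).toReal| ≤ ε := by
  classical
  have := Fintype.ofFinite S
  have hA := sum_toReal_le_add_of_le_off hle hE A
  have hAc := sum_toReal_le_add_of_le_off hle hE Aᶜ
  have hp := (sum_add_sum_compl A fun a ↦ (p a).toReal).trans (sum_toReal_pmf_eq_one p)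
  have hq := (sum_add_sum_compl A fun a ↦ (q a).toReal).trans (sum_toReal_pmf_eq_one q)
  rw [abs_le]
  constructor <;> linarith

-- Depending on whether `M` lies below or above `1 / #s`, one of the two distributions dominates
-- the other off an exceptional set of mass at most `ε`: off `sᶜ`, respectively off `E`.
theorem abs_sum_uniformOfFinset_sub_le [Fintype S] [DecidableEq S] {s E : Finset S}
    (hs : s.Nonempty) {p : PMF S} {M ε : ℝ} (hupper : ∀ a ∈ s, (p a).toReal ≤ M)
    (hlower : ∀ a ∈ s, a ∉ E → M ≤ (p a).toReal) (hout : ∑ a ∈ sᶜ, (p a).toReal ≤ ε)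
    (hE : #E ≤ ε * #s) (A : Finset S) :
    |∑ a ∈ A, (PMF.uniformOfFinset s hs a).toReal - ∑ a ∈ A, (p a).toReal| ≤ ε := by
  rcases le_total M (#s : ℝ)⁻¹ with hM | hM
  · rw [abs_sub_comm]
    refine abs_sum_toReal_sub_le_of_le_off (fun a ha ↦ ?_) hout A
    have has : a ∈ s := by simpa only [mem_compl, not_not] using ha
    rw [toReal_uniformOfFinset_apply_of_mem hs has]
    exact (hupper a has).trans hM
  · have hle : ∀ a, (PMF.uniformOfFinset s hs a).toReal ≤ (#s : ℝ)⁻¹ := fun a ↦ by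
      by_cases ha : a ∈ s
      · rw [toReal_uniformOfFinset_apply_of_mem hs ha]
      · rw [toReal_uniformOfFinset_apply_of_notMem hs ha]
        positivity
    refine abs_sum_toReal_sub_le_of_le_off (E := E) (fun a ha ↦ ?_) ?_ A
    · by_cases has : a ∈ s
      · exact (hle a).trans (hM.trans (hlower a has ha))
      · rw [toReal_uniformOfFinset_apply_of_notMem hs has]
        exact ENNReal.toReal_nonneg
    · calc ∑ a ∈ E, (PMF.uniformOfFinset s hs a).toReal ≤ #E * (#s : ℝ)⁻¹ := by
            rw [← nsmul_eq_mul]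
            exact sum_le_card_nsmul E _ _ fun a _ ↦ hle a
        _ ≤ ε := by rwa [mul_inv_le_iff₀ (by exact_mod_cast hs.card_pos)]

end PMF

section Switching

variable {V : Type*} {k : ℕ} {G : SimpleGraph V} {v u : V} {σ τ : V → Fin k} {q : Fin k}

lemma self_mem_disagreeSet : v ∈ disagreeSet G v σ q :=
  ⟨.nil, fun w hw ↦ .inl (by rw [SimpleGraph.Walk.mem_support_nil_iff.1 hw])⟩

lemma eq_or_eq_of_mem_disagreeSet {x : V} (hx : x ∈ disagreeSet G v σ q) :
    σ x = σ v ∨ σ x = q :=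
  let ⟨p, hp⟩ := hx
  hp x p.end_mem_support

lemma mem_disagreeSet_of_adj {x y : V} (hx : x ∈ disagreeSet G v σ q) (hxy : G.Adj x y)
    (hy : σ y = σ v ∨ σ y = q) : y ∈ disagreeSet G v σ q := by
  obtain ⟨p, hp⟩ := hx
  refine ⟨p.concat hxy, fun w hw ↦ ?_⟩
  rw [SimpleGraph.Walk.support_concat, List.mem_append,
    List.mem_singleton] at hw
  rcases hw with hw | rfl
  · exact hp w hw
  · exact hy

lemma switchColour_of_mem {x : V} (hx : x ∈ disagreeSet G v σ q) :
    switchColour G v σ q x = Equiv.swap (σ v) q (σ x) := by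
  rw [switchColour, if_pos hx, Equiv.swap_apply_def]

lemma switchColour_of_notMem {x : V} (hx : x ∉ disagreeSet G v σ q) :
    switchColour G v σ q x = σ x :=
  if_neg hx

lemma switchColour_self : switchColour G v σ q v = q := by
  rw [switchColour_of_mem self_mem_disagreeSet, Equiv.swap_apply_left]

lemma switchColour_eq_or_eq_iff {x : V} :
    (switchColour G v σ q x = q ∨ switchColour G v σ q x = σ v) ↔ (σ x = σ v ∨ σ x = q) := by
  by_cases hx : x ∈ disagreeSet G v σ q
  · rw [switchColour_of_mem hx, Equiv.swap_apply_eq_iff, Equiv.swap_apply_eq_iff,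
      Equiv.swap_apply_left, Equiv.swap_apply_right]
  · rw [switchColour_of_notMem hx, or_comm]

lemma disagreeSet_switchColour :
    disagreeSet G v (switchColour G v σ q) (σ v) = disagreeSet G v σ q := by
  simp only [disagreeSet, switchColour_self, switchColour_eq_or_eq_iff]

lemma switchColour_switchColour :
    switchColour G v (switchColour G v σ q) (σ v) = σ := by
  funext x
  by_cases hx : x ∈ disagreeSet G v σ q
  · rw [switchColour_of_mem (by rwa [disagreeSet_switchColour]), switchColour_self,
      switchColour_of_mem hx, Equiv.swap_comm, Equiv.swap_apply_self]
  · rw [switchColour_of_notMem (by rwa [disagreeSet_switchColour]), switchColour_of_notMem hx]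

lemma switchColour_ne_of_mem_of_notMem {x y : V} (hxy : G.Adj x y)
    (hx : x ∈ disagreeSet G v σ q) (hy : y ∉ disagreeSet G v σ q) :
    switchColour G v σ q x ≠ switchColour G v σ q y := fun h ↦ by
  have hcol := (switchColour_eq_or_eq_iff (G := G)).2 (eq_or_eq_of_mem_disagreeSet hx)
  rw [h] at hcol
  exact hy (mem_disagreeSet_of_adj hx hxy (switchColour_eq_or_eq_iff.1 hcol))

lemma switchColour_proper (hσ : ∀ x y, G.Adj x y → σ x ≠ σ y) (x y : V) (hxy : G.Adj x y) :
    switchColour G v σ q x ≠ switchColour G v σ q y := by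
  by_cases hx : x ∈ disagreeSet G v σ q <;> by_cases hy : y ∈ disagreeSet G v σ q
  · rw [switchColour_of_mem hx, switchColour_of_mem hy]
    exact (Equiv.injective _).ne (hσ x y hxy)
  · exact switchColour_ne_of_mem_of_notMem hxy hx hy
  · exact (switchColour_ne_of_mem_of_notMem hxy.symm hy hx).symm
  · rw [switchColour_of_notMem hx, switchColour_of_notMem hy]
    exact hσ x y hxy

lemma switchColour_apply_eq_apply_iff (hbad : σ v = σ u) (hq : q ≠ σ v) :
    switchColour G v σ q v = switchColour G v σ q u ↔ u ∈ disagreeSet G v σ q := by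
  rw [switchColour_self]
  by_cases hu : u ∈ disagreeSet G v σ q
  · simp only [switchColour_of_mem hu, ← hbad, Equiv.swap_apply_left, hu]
  · simp only [switchColour_of_notMem hu, ← hbad, hq, hu]

lemma switchColour_eq_iff_of_bad_of_good (hbad : σ v = σ u) (hgood : τ v ≠ τ u) :
    switchColour G v σ q = τ ↔
      q = τ v ∧ u ∉ disagreeSet G v τ (τ u) ∧ σ = switchColour G v τ (τ u) := by
  constructor
  · rintro rfl
    rw [switchColour_self] at hgood
    have hu : u ∉ disagreeSet G v σ q := fun hu ↦ hgood (by
      rw [switchColour_of_mem hu, ← hbad, Equiv.swap_apply_left])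
    have hσu : switchColour G v σ q u = σ v := by rw [switchColour_of_notMem hu, hbad]
    rw [hσu, switchColour_self, switchColour_switchColour, disagreeSet_switchColour]
    exact ⟨rfl, hu, rfl⟩
  · rintro ⟨rfl, -, rfl⟩
    exact switchColour_switchColour

end Switching

section Step

variable {V : Type*} {k : ℕ} {G : SimpleGraph V} {v u : V} {σ τ : V → Fin k}

lemma stepPMF_of_good (hk : 2 ≤ k) (hσ : σ v ≠ σ u) : stepPMF hk G v u σ = PMF.pure σ :=
  if_neg hσ

lemma sum_toReal_stepPMF_of_bad [DecidableEq (V → Fin k)] (hk : 2 ≤ k) (hσ : σ v = σ u)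
    (B : Finset (V → Fin k)) :
    ∑ τ ∈ B, (stepPMF hk G v u σ τ).toReal =
      (#{q ∈ univ.erase (σ v) | switchColour G v σ q ∈ B} : ℝ) / (k - 1 : ℕ) := by
  rw [stepPMF, if_pos hσ, sum_toReal_map_uniformOfFinset, card_erase_of_mem (mem_univ _),
    card_univ, Fintype.card_fin]

lemma toReal_stepPMF_apply_of_bad_of_good [DecidableEq (V → Fin k)]
    [Decidable (u ∈ disagreeSet G v τ (τ u))] (hk : 2 ≤ k) (hσ : σ v = σ u) (hτ : τ v ≠ τ u) :
    (stepPMF hk G v u σ τ).toReal =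
      if u ∉ disagreeSet G v τ (τ u) ∧ σ = switchColour G v τ (τ u) then
        ((k - 1 : ℕ) : ℝ)⁻¹ else 0 := by
  rw [← sum_singleton (fun ρ ↦ (stepPMF hk G v u σ ρ).toReal) τ, sum_toReal_stepPMF_of_bad hk hσ]
  simp only [mem_singleton, switchColour_eq_iff_of_bad_of_good hσ hτ]
  split_ifs with h
  · have hτv : τ v ∈ univ.erase (σ v) := by
      rw [mem_erase, h.2, switchColour_self]
      exact ⟨hτ, mem_univ _⟩
    have hfilter : {q ∈ univ.erase (σ v) | q = τ v ∧ u ∉ disagreeSet G v τ (τ u) ∧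
        σ = switchColour G v τ (τ u)} = {τ v} := by
      simp only [and_iff_left h, filter_eq', if_pos hτv]
    rw [hfilter, card_singleton, Nat.cast_one, one_div]
  · simp only [h, and_false, filter_false, card_empty, Nat.cast_zero, zero_div]

lemma toReal_stepPMF_apply_of_good [DecidableEq (V → Fin k)]
    [Decidable (u ∈ disagreeSet G v τ (τ u))] (hk : 2 ≤ k) (hτ : τ v ≠ τ u) :
    (stepPMF hk G v u σ τ).toReal = (if σ = τ then 1 else 0) +
      if u ∉ disagreeSet G v τ (τ u) ∧ σ = switchColour G v τ (τ u) then
        ((k - 1 : ℕ) : ℝ)⁻¹ else 0 := by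
  by_cases hσ : σ v = σ u
  · have hne : σ ≠ τ := fun h ↦ hτ (h ▸ hσ)
    rw [toReal_stepPMF_apply_of_bad_of_good hk hσ hτ, if_neg hne, zero_add]
  · have hswitch : ¬(u ∉ disagreeSet G v τ (τ u) ∧ σ = switchColour G v τ (τ u)) := by
      rintro ⟨hu, rfl⟩
      exact hσ (by rw [switchColour_self, switchColour_of_notMem hu])
    rw [stepPMF_of_good hk hσ, PMF.pure_apply, if_neg hswitch, add_zero, eq_comm (a := τ)]
    split_ifs <;> simp only [ENNReal.toReal_one, ENNReal.toReal_zero]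

end Step

section Colourings

variable {V : Type*} [Fintype V] {G : SimpleGraph V} {k : ℕ} {v u : V} {σ τ : V → Fin k} {α : ℝ}

lemma mem_colourings : σ ∈ colourings G k ↔ ∀ x y, G.Adj x y → σ x ≠ σ y :=
  Set.Finite.mem_toFinset _

lemma mem_goodColourings :
    σ ∈ goodColourings G k v u ↔ σ ∈ colourings G k ∧ σ v ≠ σ u := by
  rw [mem_colourings]
  exact Set.Finite.mem_toFinset _

lemma switchColour_mem_colourings {q : Fin k} (hσ : σ ∈ colourings G k) :
    switchColour G v σ q ∈ colourings G k :=
  mem_colourings.2 (switchColour_proper (mem_colourings.1 hσ))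

variable (G k v u) in
/-- The bad proper colourings, those giving `v` and `u` the same colour. They are the colourings
that STEP has to repair. -/
noncomputable def badColourings : Finset (V → Fin k) := {σ ∈ colourings G k | σ v = σ u}

variable (G v u) in
/-- The set `Ω(c,q)` of proper colourings with `σ v = c` and `σ u = q`, as a finset; the fibres
over which exceptional colourings are counted. -/
noncomputable def pinnedColourings (c q : Fin k) : Finset (V → Fin k) :=
  {σ ∈ colourings G k | σ v = c ∧ σ u = q}

lemma mem_badColourings : σ ∈ badColourings G k v u ↔ σ ∈ colourings G k ∧ σ v = σ u :=
  mem_filter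

lemma mem_pinnedColourings {c q : Fin k} :
    σ ∈ pinnedColourings G v u c q ↔ σ ∈ colourings G k ∧ σ v = c ∧ σ u = q :=
  mem_filter

lemma ncard_eq_card_pinnedColourings (c q : Fin k) :
    {σ : V → Fin k | (∀ x y, G.Adj x y → σ x ≠ σ y) ∧ σ v = c ∧ σ u = q}.ncard =
      #(pinnedColourings G v u c q) := by
  rw [← Set.ncard_coe_finset]
  congr! 1
  ext σ
  rw [mem_coe, mem_pinnedColourings, mem_colourings]
  rfl

open scoped Classical in
lemma ncard_eq_card_pinnedColourings_disagreeSet (c q r : Fin k) :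
    {σ : V → Fin k | (∀ x y, G.Adj x y → σ x ≠ σ y) ∧ σ v = c ∧ σ u = q ∧
      u ∈ disagreeSet G v σ r}.ncard =
      #{σ ∈ pinnedColourings G v u c q | u ∈ disagreeSet G v σ r} := by
  rw [← Set.ncard_coe_finset]
  congr! 1
  ext σ
  rw [mem_coe, mem_filter, mem_pinnedColourings, mem_colourings, and_assoc, and_assoc]
  rfl

open scoped Classical in
lemma card_goodColourings_disagreeSet_le
    (h : ∀ c q : Fin k, c ≠ q → (#{σ ∈ pinnedColourings G v u c q | u ∈ disagreeSet G v σ q} : ℝ) ≤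
      α * #(pinnedColourings G v u c q)) :
    (#{σ ∈ goodColourings G k v u | u ∈ disagreeSet G v σ (σ u)} : ℝ) ≤
      α * #(goodColourings G k v u) := by
  rw [← sum_boole]
  refine sum_le_mul_card_of_fiberwise (fun σ ↦ (σ v, σ u)) ?_
  rintro b hb
  obtain ⟨ρ, hρ, rfl⟩ := mem_image.1 hb
  have hcq : ρ v ≠ ρ u := (mem_goodColourings.1 hρ).2
  have hfibre : {σ ∈ goodColourings G k v u | (σ v, σ u) = (ρ v, ρ u)} =
      pinnedColourings G v u (ρ v) (ρ u) := by
    ext σ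
    rw [mem_filter, mem_goodColourings, mem_pinnedColourings, Prod.mk_inj]
    grind
  have hpinned : {σ ∈ pinnedColourings G v u (ρ v) (ρ u) | u ∈ disagreeSet G v σ (σ u)} =
      {σ ∈ pinnedColourings G v u (ρ v) (ρ u) | u ∈ disagreeSet G v σ (ρ u)} :=
    filter_congr fun σ hσ ↦ by rw [(mem_pinnedColourings.1 hσ).2.2]
  rw [hfibre, sum_boole, hpinned]
  exact h _ _ hcq

open scoped Classical in
lemma sum_card_badColourings_disagreeSet_le
    (h : ∀ c q : Fin k, c ≠ q → (#{σ ∈ pinnedColourings G v u c c | u ∈ disagreeSet G v σ q} : ℝ) ≤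
      α * #(pinnedColourings G v u c c)) :
    ∑ σ ∈ badColourings G k v u, (#{q ∈ univ.erase (σ v) | u ∈ disagreeSet G v σ q} : ℝ) ≤
      (k - 1 : ℕ) * α * #(badColourings G k v u) := by
  refine sum_le_mul_card_of_fiberwise (fun σ ↦ σ v) fun c _ ↦ ?_
  have hfibre : {σ ∈ badColourings G k v u | σ v = c} = pinnedColourings G v u c c := by
    ext σ
    rw [mem_filter, mem_badColourings, mem_pinnedColourings]
    grind
  rw [hfibre]
  calc ∑ σ ∈ pinnedColourings G v u c c,
        (#{q ∈ univ.erase (σ v) | u ∈ disagreeSet G v σ q} : ℝ)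
      = ∑ σ ∈ pinnedColourings G v u c c,
          (#{q ∈ univ.erase c | u ∈ disagreeSet G v σ q} : ℝ) :=
        sum_congr rfl fun σ hσ ↦ by rw [(mem_pinnedColourings.1 hσ).2.1]
    _ = ∑ q ∈ univ.erase c,
          (#{σ ∈ pinnedColourings G v u c c | u ∈ disagreeSet G v σ q} : ℝ) := by
        exact_mod_cast sum_card_bipartiteAbove_eq_sum_card_bipartiteBelow
          (fun σ q ↦ u ∈ disagreeSet G v σ q)
    _ ≤ #(univ.erase c) • (α * #(pinnedColourings G v u c c)) :=
        sum_le_card_nsmul _ _ _ fun q hq ↦ h c q (ne_of_mem_erase hq).symm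
    _ = (k - 1 : ℕ) * α * #(pinnedColourings G v u c c) := by
        rw [card_erase_of_mem (mem_univ c), card_univ, Fintype.card_fin, nsmul_eq_mul, mul_assoc]

open scoped Classical in
lemma toReal_uniform_bind_stepPMF_apply_of_good (hk : 2 ≤ k) (hΩ : (colourings G k).Nonempty)
    (hτ : τ ∈ goodColourings G k v u) :
    (((PMF.uniformOfFinset (colourings G k) hΩ).bind (stepPMF hk G v u)) τ).toReal =
      (1 + if u ∉ disagreeSet G v τ (τ u) then ((k - 1 : ℕ) : ℝ)⁻¹ else 0) /
        #(colourings G k) := by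
  obtain ⟨hτΩ, hτuv⟩ := mem_goodColourings.1 hτ
  simp only [toReal_bind_uniformOfFinset_apply, toReal_stepPMF_apply_of_good hk hτuv, ite_and,
    sum_add_distrib, sum_ite_irrel, sum_ite_eq', sum_const_zero, hτΩ,
    switchColour_mem_colourings hτΩ, if_true]

open scoped Classical in
lemma sum_toReal_stepPMF_compl_of_good (hk : 2 ≤ k)
    (hσ : σ ∈ goodColourings G k v u) :
    ∑ τ ∈ (goodColourings G k v u)ᶜ, (stepPMF hk G v u σ τ).toReal = 0 := by
  refine sum_eq_zero fun τ hτ ↦ ?_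
  have hne : τ ≠ σ := fun h ↦ mem_compl.1 hτ (h ▸ hσ)
  rw [stepPMF_of_good hk (mem_goodColourings.1 hσ).2, PMF.pure_apply_of_ne _ _ hne,
    ENNReal.toReal_zero]

open scoped Classical in
lemma sum_toReal_stepPMF_compl_le_of_bad (hk : 2 ≤ k) (hσ : σ ∈ badColourings G k v u) :
    ∑ τ ∈ (goodColourings G k v u)ᶜ, (stepPMF hk G v u σ τ).toReal ≤
      (#{q ∈ univ.erase (σ v) | u ∈ disagreeSet G v σ q} : ℝ) / (k - 1 : ℕ) := by
  obtain ⟨hσΩ, hσuv⟩ := mem_badColourings.1 hσ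
  rw [sum_toReal_stepPMF_of_bad hk hσuv]
  gcongr with q hq
  rw [mem_compl, mem_goodColourings, not_and_not_right]
  intro h
  exact (switchColour_apply_eq_apply_iff hσuv (ne_of_mem_erase hq)).1
    (h (switchColour_mem_colourings hσΩ))

open scoped Classical in
lemma sum_toReal_uniform_bind_stepPMF_compl_le (hk : 2 ≤ k) (hΩ : (colourings G k).Nonempty)
    (hα : 0 ≤ α) (h : ∀ c q : Fin k, c ≠ q →
      (#{σ ∈ pinnedColourings G v u c c | u ∈ disagreeSet G v σ q} : ℝ) ≤
        α * #(pinnedColourings G v u c c)) :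
    ∑ τ ∈ (goodColourings G k v u)ᶜ,
      (((PMF.uniformOfFinset (colourings G k) hΩ).bind (stepPMF hk G v u)) τ).toReal ≤ α := by
  have hk1 : (0 : ℝ) < (k - 1 : ℕ) := by exact_mod_cast Nat.sub_pos_of_lt hk
  have hgood : ∑ σ ∈ colourings G k with ¬σ v = σ u,
      ∑ τ ∈ (goodColourings G k v u)ᶜ, (stepPMF hk G v u σ τ).toReal = 0 :=
    sum_eq_zero fun σ hσ ↦
      sum_toReal_stepPMF_compl_of_good hk (mem_goodColourings.2 (mem_filter.1 hσ))
  have hbad : ∑ σ ∈ badColourings G k v u,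
      ∑ τ ∈ (goodColourings G k v u)ᶜ, (stepPMF hk G v u σ τ).toReal ≤ α * #(colourings G k) :=
    calc _ ≤ ∑ σ ∈ badColourings G k v u,
            (#{q ∈ univ.erase (σ v) | u ∈ disagreeSet G v σ q} : ℝ) / (k - 1 : ℕ) :=
          sum_le_sum fun σ hσ ↦ sum_toReal_stepPMF_compl_le_of_bad hk hσ
      _ ≤ α * #(badColourings G k v u) := by
          rw [← sum_div, div_le_iff₀' hk1, ← mul_assoc]
          exact sum_card_badColourings_disagreeSet_le h
      _ ≤ α * #(colourings G k) := by
          gcongr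
          exact filter_subset _ _
  simp only [toReal_bind_uniformOfFinset_apply]
  rw [← sum_div, sum_comm, div_le_iff₀ (by exact_mod_cast hΩ.card_pos),
    ← sum_filter_add_sum_filter_not (colourings G k) (fun σ ↦ σ v = σ u), hgood, add_zero]
  exact hbad

end Colourings

/-- if `k ≥ 2`, `Ω` and the good colourings are nonempty and for all
distinct colours `c q` at most an `α` fraction of `Ω(c,c)` has `u ∈ Q_{c,q}` and at most
an `α` fraction of `Ω(q,c)` has `u ∈ Q_{q,c}`, then the distribution `ν'` of the output
of STEP on a uniformly random proper colouring is within total variation distance `α`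
of the uniform distribution `ν` on the good colourings. -/
theorem stmt6 {V : Type*} [Fintype V] {k : ℕ} (hk : 2 ≤ k)
    (G : SimpleGraph V) (v u : V) (huv : u ≠ v) (hadj : ¬ G.Adj v u)
    (hΩ : (colourings G k).Nonempty) (hgood : (goodColourings G k v u).Nonempty)
    (α : ℝ) (hα₀ : 0 ≤ α) (hα₁ : α ≤ 1)
    (hiso : ∀ c q : Fin k, c ≠ q →
      ((({σ : V → Fin k | (∀ x y, G.Adj x y → σ x ≠ σ y) ∧ σ v = c ∧ σ u = c ∧
            u ∈ disagreeSet G v σ q}).ncard : ℝ) ≤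
        α * (({σ : V → Fin k | (∀ x y, G.Adj x y → σ x ≠ σ y) ∧ σ v = c ∧
            σ u = c}).ncard : ℝ)) ∧
      ((({σ : V → Fin k | (∀ x y, G.Adj x y → σ x ≠ σ y) ∧ σ v = q ∧ σ u = c ∧
            u ∈ disagreeSet G v σ c}).ncard : ℝ) ≤
        α * (({σ : V → Fin k | (∀ x y, G.Adj x y → σ x ≠ σ y) ∧ σ v = q ∧
            σ u = c}).ncard : ℝ))) :
    ∀ A : Finset (V → Fin k),
      |(∑ a ∈ A, ((PMF.uniformOfFinset (goodColourings G k v u) hgood) a).toReal) -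
        (∑ a ∈ A, (((PMF.uniformOfFinset (colourings G k) hΩ).bind
          (stepPMF hk G v u)) a).toReal)| ≤ α := by
  classical
  intro A
  have hout := sum_toReal_uniform_bind_stepPMF_compl_le hk hΩ hα₀ fun c q hcq ↦ by
    rw [← ncard_eq_card_pinnedColourings_disagreeSet, ← ncard_eq_card_pinnedColourings]
    exact (hiso c q hcq).1
  have hE := card_goodColourings_disagreeSet_le (G := G) (v := v) (u := u) (α := α)
    fun c q hcq ↦ by
      rw [← ncard_eq_card_pinnedColourings_disagreeSet, ← ncard_eq_card_pinnedColourings]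
      exact (hiso q c hcq.symm).2
  refine abs_sum_uniformOfFinset_sub_le (M := (1 + ((k - 1 : ℕ) : ℝ)⁻¹) / #(colourings G k))
    hgood (fun τ hτ ↦ ?_) (fun τ hτ hτE ↦ ?_) hout hE A
  · rw [toReal_uniform_bind_stepPMF_apply_of_good hk hΩ hτ]
    gcongr
    split_ifs
    exacts [by positivity, le_rfl]
  · have hu : u ∉ disagreeSet G v τ (τ u) := fun hu ↦ hτE (mem_filter.2 ⟨hτ, hu⟩)
    rw [toReal_uniform_bind_stepPMF_apply_of_good hk hΩ hτ, if_pos hu]
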